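/- For every t₀ > 0 and every x ∈ ℝ, one has lim_{t→∞} t^{1/4} ∫₀^{t₀} ∫_ℝ p_{t−s}( x − y )² · ( s |y| )^{−1/2} dy ds = 0. -/

import Mathlib

open MeasureTheory Filter Set

/-- The one-dimensional heat kernel `p_t(x) = (2πt)^{-1/2} exp(-x²/(2t))`. -/
noncomputable def heatKernel (t x : ℝ) : ℝ :=
  (2 * Real.pi * t) ^ (-(1:ℝ)/2) * Real.exp (-x ^ 2 / (2 * t))

/-! As a function of `y`, the square `p_u(x - y)²` is at most `(2πu)⁻¹` and has integral
`(2√(πu))⁻¹`. Cutting `|y| ^ p` at the diffusive scale `|y| = √u`, with the first bound inside and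
the second outside, gives `∫ p_u(x - y)² |y| ^ p dy = O(u ^ ((p - 1) / 2))` uniformly in `x`.
Averaging over bounded time shifts against an integrable weight keeps this rate, which for
`p = -1/2` is `t ^ (-3/4)` and beats the factor `t ^ (1/4)`. -/

section AbsRpow

variable {p r : ℝ}

lemma intervalIntegrable_abs_rpow (hp : -1 < p) (a b : ℝ) :
    IntervalIntegrable (fun y : ℝ => |y| ^ p) volume a b := by
  refine intervalIntegrable_of_even (fun y => by rw [abs_neg]) fun c hc => ?_
  refine (intervalIntegral.intervalIntegrable_rpow' hp).congr fun y hy => ?_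
  rw [uIoc_of_le hc.le] at hy
  simp only [abs_of_pos hy.1]

lemma intervalIntegral_abs_rpow (hp : -1 < p) (hr : 0 ≤ r) :
    ∫ y in -r..r, |y| ^ p = 2 * r ^ (p + 1) / (p + 1) := by
  have h_pos : ∫ y in 0..r, |y| ^ p = r ^ (p + 1) / (p + 1) := by
    rw [intervalIntegral.integral_congr (g := fun y => y ^ p), integral_rpow (.inl hp),
      Real.zero_rpow (by linarith), sub_zero]
    intro y hy
    rw [uIcc_of_le hr] at hy
    simp only [abs_of_nonneg hy.1]
  have h_neg : ∫ y in -r..0, |y| ^ p = ∫ y in 0..r, |y| ^ p := by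
    simpa only [abs_neg, neg_zero, neg_neg] using
      intervalIntegral.integral_comp_neg (a := -r) (b := 0) fun y : ℝ => |y| ^ p
  rw [← intervalIntegral.integral_add_adjacent_intervals (intervalIntegrable_abs_rpow hp _ 0)
    (intervalIntegrable_abs_rpow hp _ _), h_neg, h_pos]
  ring

lemma integral_mul_abs_rpow_le {g : ℝ → ℝ} {M : ℝ} (hg : Integrable g) (hg₀ : ∀ y, 0 ≤ g y)
    (hgM : ∀ y, g y ≤ M) (hp : -1 < p) (hp₀ : p ≤ 0) (hr : 0 < r) :
    ∫ y, g y * |y| ^ p ≤ M * (2 * r ^ (p + 1) / (p + 1)) + r ^ p * ∫ y, g y := by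
  have h_near : Integrable ((Ioc (-r) r).indicator fun y => M * |y| ^ p) :=
    (integrable_indicator_iff measurableSet_Ioc).2
      ((intervalIntegrable_abs_rpow hp (-r) r).1.const_mul M)
  calc ∫ y, g y * |y| ^ p
      ≤ ∫ y, ((Ioc (-r) r).indicator (fun y => M * |y| ^ p) y + r ^ p * g y) := by
        refine integral_mono_of_nonneg (ae_of_all _ fun y => mul_nonneg (hg₀ y) (by positivity))
          (h_near.add (hg.const_mul _)) (ae_of_all _ fun y => ?_)
        have h_tail : 0 ≤ r ^ p * g y := mul_nonneg (by positivity) (hg₀ y)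
        by_cases hy : y ∈ Ioc (-r) r
        · have h_bound : g y * |y| ^ p ≤ M * |y| ^ p := by gcongr; exact hgM y
          simpa only [indicator_of_mem hy] using h_bound.trans (le_add_of_nonneg_right h_tail)
        · have hry : r ≤ |y| := by
            by_contra! h
            exact hy ⟨(abs_lt.1 h).1, (abs_lt.1 h).2.le⟩
          simp only [indicator_of_notMem hy, zero_add, mul_comm (g y)]
          exact mul_le_mul_of_nonneg_right (Real.rpow_le_rpow_of_nonpos hr hry hp₀) (hg₀ y)
    _ = M * (2 * r ^ (p + 1) / (p + 1)) + r ^ p * ∫ y, g y := by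
        rw [integral_add h_near (hg.const_mul _), integral_indicator measurableSet_Ioc,
          integral_const_mul, integral_const_mul,
          ← intervalIntegral.integral_of_le (by linarith), intervalIntegral_abs_rpow hp hr.le]

end AbsRpow

section HeatKernel

variable {u : ℝ}

lemma heatKernel_sq (hu : 0 < u) (z : ℝ) :
    heatKernel u z ^ 2 = (2 * Real.pi * u)⁻¹ * Real.exp (-u⁻¹ * z ^ 2) := by
  have h_scale : 0 ≤ 2 * Real.pi * u := by positivity
  rw [heatKernel, mul_pow, ← Real.rpow_mul_natCast h_scale, ← Real.exp_nat_mul,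
    ← Real.rpow_neg_one]
  congr 2
  · norm_num
  · push_cast
    field_simp

lemma heatKernel_sq_le (hu : 0 < u) (z : ℝ) : heatKernel u z ^ 2 ≤ (2 * Real.pi * u)⁻¹ := by
  rw [heatKernel_sq hu]
  refine mul_le_of_le_one_right (by positivity) (Real.exp_le_one_iff.2 ?_)
  rw [neg_mul, neg_nonpos]
  positivity

lemma integrable_heatKernel_sq (hu : 0 < u) : Integrable fun z => heatKernel u z ^ 2 := by
  simpa only [heatKernel_sq hu] using (integrable_exp_neg_mul_sq (inv_pos.2 hu)).const_mul _

lemma integral_heatKernel_sq (hu : 0 < u) :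
    ∫ z, heatKernel u z ^ 2 = (2 * √(Real.pi * u))⁻¹ := by
  simp only [heatKernel_sq hu, integral_const_mul, integral_gaussian, div_inv_eq_mul]
  rw [mul_assoc 2, mul_inv, mul_inv 2, mul_assoc, inv_mul_eq_div (Real.pi * u), Real.sqrt_div_self]

lemma integral_heatKernel_sq_mul_abs_rpow_le {p : ℝ} (hp : -1 < p) (hp₀ : p ≤ 0) (hu : 0 < u)
    (x : ℝ) :
    ∫ y, heatKernel u (x - y) ^ 2 * |y| ^ p ≤
      ((Real.pi * (p + 1))⁻¹ + (2 * √Real.pi)⁻¹) * u ^ ((p - 1) / 2) := by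
  have h_inner : u⁻¹ * √u ^ (p + 1) = u ^ ((p - 1) / 2) := by
    rw [Real.sqrt_eq_rpow, ← Real.rpow_mul hu.le, ← Real.rpow_neg_one, ← Real.rpow_add hu]
    ring_nf
  have h_outer : √u ^ p * (√u)⁻¹ = u ^ ((p - 1) / 2) := by
    rw [← div_eq_mul_inv, ← Real.rpow_sub_one (Real.sqrt_pos.2 hu).ne', Real.sqrt_eq_rpow,
      ← Real.rpow_mul hu.le]
    ring_nf
  calc ∫ y, heatKernel u (x - y) ^ 2 * |y| ^ p
      ≤ (2 * Real.pi * u)⁻¹ * (2 * √u ^ (p + 1) / (p + 1)) +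
          √u ^ p * ∫ y, heatKernel u (x - y) ^ 2 :=
        integral_mul_abs_rpow_le ((integrable_heatKernel_sq hu).comp_sub_left x)
          (fun y => sq_nonneg _) (fun y => heatKernel_sq_le hu _) hp hp₀ (Real.sqrt_pos.2 hu)
    _ = (Real.pi * (p + 1))⁻¹ * (u⁻¹ * √u ^ (p + 1)) +
          (2 * √Real.pi)⁻¹ * (√u ^ p * (√u)⁻¹) := by
        rw [integral_sub_left_eq_self (fun z => heatKernel u z ^ 2) volume x,
          integral_heatKernel_sq hu, Real.sqrt_mul Real.pi_pos.le]
        simp only [mul_inv, div_eq_mul_inv]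
        ring
    _ = ((Real.pi * (p + 1))⁻¹ + (2 * √Real.pi)⁻¹) * u ^ ((p - 1) / 2) := by
        rw [h_inner, h_outer, add_mul]

end HeatKernel

section Rates

open Asymptotics

lemma isBigO_setIntegral_mul_comp_sub {S : Set ℝ} {w F : ℝ → ℝ} {q : ℝ} (hS : MeasurableSet S)
    (hS_bdd : BddAbove S) (hw : IntegrableOn w S) (hq : q ≤ 0)
    (hF : F =O[atTop] fun u => u ^ q) :
    (fun t => ∫ s in S, w s * F (t - s)) =O[atTop] fun t => t ^ q := by
  obtain ⟨b, hb⟩ := hS_bdd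
  obtain ⟨C, hC, hFC⟩ := hF.exists_pos
  obtain ⟨u₀, hu₀⟩ := eventually_atTop.1 hFC.bound
  refine .of_bound ((∫ s in S, ‖w s‖) * (C * (1 / 2) ^ q)) ?_
  filter_upwards [eventually_gt_atTop 0, eventually_ge_atTop (2 * b),
    eventually_ge_atTop (2 * u₀)] with t ht htb htu
  have h_shift : ∀ s ∈ S, ‖F (t - s)‖ ≤ C * (1 / 2) ^ q * t ^ q := fun s hs => by
    have h_half : 1 / 2 * t ≤ t - s := by linarith [hb hs]
    calc ‖F (t - s)‖ ≤ C * ‖(t - s) ^ q‖ := hu₀ _ (by linarith)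
      _ = C * (t - s) ^ q := by
        rw [Real.norm_of_nonneg (Real.rpow_nonneg (by linarith) q)]
      _ ≤ C * (1 / 2 * t) ^ q := by
        gcongr ?_ * ?_
        exact Real.rpow_le_rpow_of_nonpos (by positivity) h_half hq
      _ = C * (1 / 2) ^ q * t ^ q := by
        rw [Real.mul_rpow (by norm_num) ht.le, mul_assoc]
  calc ‖∫ s in S, w s * F (t - s)‖ ≤ ∫ s in S, ‖w s‖ * (C * (1 / 2) ^ q * t ^ q) := by
        refine norm_integral_le_of_norm_le (hw.norm.mul_const _) ?_
        filter_upwards [ae_restrict_mem hS] with s hs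
        rw [norm_mul]
        gcongr
        exact h_shift s hs
    _ = (∫ s in S, ‖w s‖) * (C * (1 / 2) ^ q) * ‖t ^ q‖ := by
        rw [integral_mul_const, Real.norm_of_nonneg (Real.rpow_nonneg ht.le q)]
        ring

variable {p : ℝ}

lemma isBigO_integral_heatKernel_sq_mul_abs_rpow (hp : -1 < p) (hp₀ : p ≤ 0) (x : ℝ) :
    (fun u => ∫ y, heatKernel u (x - y) ^ 2 * |y| ^ p) =O[atTop] fun u => u ^ ((p - 1) / 2) := by
  refine .of_bound ((Real.pi * (p + 1))⁻¹ + (2 * √Real.pi)⁻¹) ?_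
  filter_upwards [eventually_gt_atTop 0] with u hu
  rw [Real.norm_of_nonneg (integral_nonneg fun y => by positivity),
    Real.norm_of_nonneg (by positivity)]
  exact integral_heatKernel_sq_mul_abs_rpow_le hp hp₀ hu x

lemma isBigO_integral_integral_heatKernel_sq_mul_rpow (hp : -1 < p) (hp₀ : p ≤ 0) (t₀ x : ℝ) :
    (fun t => ∫ s in Ioo 0 t₀, ∫ y, heatKernel (t - s) (x - y) ^ 2 * (s * |y|) ^ p)
      =O[atTop] fun t => t ^ ((p - 1) / 2) := by
  have h_weight : IntegrableOn (fun s : ℝ => s ^ p) (Ioo 0 t₀) :=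
    (intervalIntegral.intervalIntegrable_rpow' hp).1.mono_set Ioo_subset_Ioc_self
  refine (isBigO_setIntegral_mul_comp_sub measurableSet_Ioo bddAbove_Ioo h_weight (by linarith)
    (isBigO_integral_heatKernel_sq_mul_abs_rpow hp hp₀ x)).congr_left fun t => ?_
  refine setIntegral_congr_fun measurableSet_Ioo fun s hs => ?_
  simp only [Real.mul_rpow hs.1.le (abs_nonneg _), ← integral_const_mul, mul_left_comm]

theorem tendsto_scaled_integral_general {γ : ℝ} (hp : -1 < p) (hp₀ : p ≤ 0)
    (hγ : γ < (1 - p) / 2) (t₀ x : ℝ) :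
    Tendsto (fun t : ℝ => t ^ γ * ∫ s in Ioo 0 t₀, ∫ y,
        heatKernel (t - s) (x - y) ^ 2 * (s * |y|) ^ p)
      atTop (nhds 0) := by
  have h_exp : 0 < (1 - p) / 2 - γ := sub_pos.2 hγ
  refine (((isBigO_refl (fun t : ℝ => t ^ γ) atTop).mul
    (isBigO_integral_integral_heatKernel_sq_mul_rpow hp hp₀ t₀ x)).trans_eventuallyEq
    ?_).trans_tendsto (tendsto_rpow_neg_atTop h_exp)
  filter_upwards [eventually_gt_atTop 0] with t ht
  rw [← Real.rpow_add ht]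
  ring_nf

end Rates

/-- For every `t₀ > 0` and `x ∈ ℝ`,
`lim_{t→∞} t^{1/4} ∫₀^{t₀} ∫_ℝ p_{t-s}(x-y)² (s|y|)^{-1/2} dy ds = 0`. -/
theorem tendsto_scaled_integral (t₀ : ℝ) (ht₀ : 0 < t₀) (x : ℝ) :
    Tendsto (fun t : ℝ => t ^ ((1:ℝ)/4) * ∫ s in Ioo (0:ℝ) t₀, ∫ y : ℝ,
        heatKernel (t - s) (x - y) ^ 2 * (s * |y|) ^ (-(1:ℝ)/2))
      atTop (nhds 0) :=
  tendsto_scaled_integral_general (by norm_num) (by norm_num) (by norm_num) t₀ x
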